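/- arXiv:2004.02243 — 3 statements merged into one kernel-verified Lean document; each statement's English description precedes it below -/
import Mathlib

section
/- Künneth formula: let (V₁, α₁) and (V₂, α₂) be cochain complexes of real vector spaces and let (V, α) be their tensor product complex, with V^n := ⊕_{p+q=n} V₁^p ⊗ V₂^q and α^n equal on the summand V₁^p ⊗ V₂^q to α₁^p ⊗ id + (−1)^p id ⊗ α₂^q. Then for every n there is a linear isomorphism of real vector spaces H^n(V) ≅ ⊕_{p+q=n} H^p(V₁) ⊗ H^q(V₂). -/
open TensorProduct DirectSum

/-- The index set `{(p, q) : p + q = n}` of the degree-`n` part of a tensor product of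
graded objects. -/
abbrev TIdx (n : ℕ) : Type := {pq : ℕ × ℕ // pq.1 + pq.2 = n}

variable (V₁ V₂ : ℕ → Type) [∀ p, AddCommGroup (V₁ p)] [∀ p, Module ℝ (V₁ p)]
  [∀ p, AddCommGroup (V₂ p)] [∀ p, Module ℝ (V₂ p)]

/-- The degree-`n` part `V^n = ⊕_{p+q=n} V₁^p ⊗ V₂^q` of the tensor product of two
graded real vector spaces. -/
abbrev TObj (n : ℕ) : Type := ⨁ pq : TIdx n, (V₁ pq.1.1 ⊗[ℝ] V₂ pq.1.2)

/-- The differential of the tensor product complex: on the summand `V₁^p ⊗ V₂^q`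
(`p + q = n`) it is `α₁^p ⊗ id + (-1)^p id ⊗ α₂^q`, landing in
`V₁^{p+1} ⊗ V₂^q ⊕ V₁^p ⊗ V₂^{q+1}`. -/
noncomputable def tAlpha (α₁ : ∀ p, V₁ p →ₗ[ℝ] V₁ (p + 1))
    (α₂ : ∀ p, V₂ p →ₗ[ℝ] V₂ (p + 1)) (n : ℕ) :
    TObj V₁ V₂ n →ₗ[ℝ] TObj V₁ V₂ (n + 1) :=
  DirectSum.toModule ℝ (TIdx n) (TObj V₁ V₂ (n + 1)) fun pq =>
    ((DirectSum.lof ℝ (TIdx (n + 1)) (fun rs => V₁ rs.1.1 ⊗[ℝ] V₂ rs.1.2)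
        ⟨(pq.1.1 + 1, pq.1.2), by have := pq.2; omega⟩).comp
      (TensorProduct.map (α₁ pq.1.1) LinearMap.id))
    + ((-1 : ℝ) ^ pq.1.1) •
      ((DirectSum.lof ℝ (TIdx (n + 1)) (fun rs => V₁ rs.1.1 ⊗[ℝ] V₂ rs.1.2)
        ⟨(pq.1.1, pq.1.2 + 1), by have := pq.2; omega⟩).comp
      (TensorProduct.map LinearMap.id (α₂ pq.1.2)))

/-- The coboundaries of a cochain complex: `B⁰ = 0` and `B^{n+1} = range α^n`. -/
noncomputable def Bnd (W : ℕ → Type) [∀ p, AddCommGroup (W p)] [∀ p, Module ℝ (W p)]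
    (β : ∀ p, W p →ₗ[ℝ] W (p + 1)) : ∀ n, Submodule ℝ (W n)
  | 0 => ⊥
  | (n + 1) => LinearMap.range (β n)

/-- The cohomology `H^n = ker α^n / im α^{n-1}` of a cochain complex of real vector
spaces (with `im α^{-1} := 0`). -/
abbrev Hcoh (W : ℕ → Type) [∀ p, AddCommGroup (W p)] [∀ p, Module ℝ (W p)]
    (β : ∀ p, W p →ₗ[ℝ] W (p + 1)) (n : ℕ) : Type :=
  ↥(LinearMap.ker (β n)) ⧸
    Submodule.comap (LinearMap.ker (β n)).subtype (Bnd W β n)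

/-! Over a field, a cochain complex deformation retracts onto its cohomology with zero differential.
Tensoring with a fixed complex preserves deformation retractions, so `V₁ ⊗ V₂` retracts onto
`H(V₁) ⊗ V₂`, which in turn retracts onto `H(V₁) ⊗ H(V₂)`. The differential of the latter is zero,
so it is its own cohomology. -/

section Complexes

universe u v w

variable {R : Type u} [Ring R]
  {A : ℕ → Type v} [∀ p, AddCommGroup (A p)] [∀ p, Module R (A p)]
  {C : ℕ → Type w} [∀ p, AddCommGroup (C p)] [∀ p, Module R (C p)]

/-- The coboundaries `im d^{n-1}` of a sequence of linear maps over an arbitrary ring, with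
`im d^{-1} := 0`. -/
def coboundaries (d : ∀ p, A p →ₗ[R] A (p + 1)) : ∀ n, Submodule R (A n)
  | 0 => ⊥
  | n + 1 => LinearMap.range (d n)

/-- The cohomology `ker d^n / im d^{n-1}` over an arbitrary ring. The condition `d ∘ d = 0` is not
part of the definition: the coboundaries are intersected with the cocycles. -/
abbrev cohomology (d : ∀ p, A p →ₗ[R] A (p + 1)) (n : ℕ) : Type v :=
  ↥(LinearMap.ker (d n)) ⧸ (coboundaries d n).comap (LinearMap.ker (d n)).subtype

/-- The map `d ∘ h + h ∘ d` built from maps `h` of degree `-1`, where `h` is zero on `A 0`. -/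
def nullHomotopicMap (d : ∀ p, A p →ₗ[R] A (p + 1)) (h : ∀ p, A (p + 1) →ₗ[R] A p) :
    ∀ n, A n →ₗ[R] A n
  | 0 => h 0 ∘ₗ d 0
  | n + 1 => d n ∘ₗ h n + h (n + 1) ∘ₗ d (n + 1)

variable {d : ∀ p, A p →ₗ[R] A (p + 1)} {δ : ∀ p, C p →ₗ[R] C (p + 1)}

theorem sub_apply_mem_coboundaries {h : ∀ p, A (p + 1) →ₗ[R] A p} {n : ℕ} {f : A n →ₗ[R] A n}
    (hf : LinearMap.id - f = nullHomotopicMap d h n) {x : A n} (hx : d n x = 0) :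
    x - f x ∈ coboundaries d n := by
  have hfx : x - f x = nullHomotopicMap d h n x := LinearMap.congr_fun hf x
  rw [hfx]
  cases n with
  | zero => simp [nullHomotopicMap, hx]
  | succ n => simp [nullHomotopicMap, coboundaries, hx]

theorem nullHomotopicMap_comp (h : ∀ p, A (p + 1) →ₗ[R] A p) {f : ∀ p, A p →ₗ[R] A p}
    (hf : ∀ p, d p ∘ₗ f p = f (p + 1) ∘ₗ d p) (n : ℕ) :
    nullHomotopicMap d (fun p => h p ∘ₗ f (p + 1)) n = nullHomotopicMap d h n ∘ₗ f n := by
  cases n <;> simp [nullHomotopicMap, LinearMap.add_comp, LinearMap.comp_assoc, hf]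

theorem coboundaries_le_ker {f : ∀ p, A p →ₗ[R] C p} (hf : ∀ p, f (p + 1) ∘ₗ d p = 0) (n : ℕ) :
    coboundaries d n ≤ LinearMap.ker (f n) := by
  cases n with
  | zero => exact bot_le
  | succ n => exact LinearMap.range_le_ker_iff.2 (hf n)

theorem coboundaries_le_comap {f : ∀ p, A p →ₗ[R] C p}
    (hf : ∀ p, δ p ∘ₗ f p = f (p + 1) ∘ₗ d p) (n : ℕ) :
    coboundaries d n ≤ (coboundaries δ n).comap (f n) := by
  cases n with
  | zero => exact bot_le
  | succ n =>
    rintro _ ⟨x, rfl⟩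
    exact ⟨f n x, LinearMap.congr_fun (hf n) x⟩

/-- The map induced on cohomology by a cochain map. -/
def cohomologyMap (f : ∀ p, A p →ₗ[R] C p) (hf : ∀ p, δ p ∘ₗ f p = f (p + 1) ∘ₗ d p) (n : ℕ) :
    cohomology d n →ₗ[R] cohomology δ n :=
  Submodule.mapQ _ _
    ((f n).restrict fun x (hx : d n x = 0) => by
      simpa [hx] using LinearMap.congr_fun (hf n) x)
    fun _ hx => coboundaries_le_comap hf n hx

/-- The cohomology of a complex with zero differential is the complex itself. -/
def cohomologyEquivOfEqZero (hd : ∀ p, d p = 0) (n : ℕ) : cohomology d n ≃ₗ[R] A n :=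
  have coboundaries_eq_bot : coboundaries d n = ⊥ := by
    cases n with
    | zero => rfl
    | succ n => simp [coboundaries, hd]
  Submodule.quotEquivOfEqBot _ (by simp [coboundaries_eq_bot]) ≪≫ₗ
    LinearEquiv.ofTop _ (by simp [hd])

/-- A deformation retraction of the cochain complex `(A, d)` onto `(C, δ)`: cochain maps
`proj` and `incl` with `proj ∘ incl = id`, and a homotopy from `incl ∘ proj` to `id`. -/
structure DeformationRetract (d : ∀ p, A p →ₗ[R] A (p + 1))
    (δ : ∀ p, C p →ₗ[R] C (p + 1)) where
  proj : ∀ p, A p →ₗ[R] C p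
  incl : ∀ p, C p →ₗ[R] A p
  homotopy : ∀ p, A (p + 1) →ₗ[R] A p
  d_comp_proj : ∀ p, δ p ∘ₗ proj p = proj (p + 1) ∘ₗ d p
  d_comp_incl : ∀ p, d p ∘ₗ incl p = incl (p + 1) ∘ₗ δ p
  proj_comp_incl : ∀ p, proj p ∘ₗ incl p = LinearMap.id
  id_sub_incl_comp_proj : ∀ p,
    LinearMap.id - incl p ∘ₗ proj p = nullHomotopicMap d homotopy p

/-- A deformation retraction induces an isomorphism on cohomology. -/
def DeformationRetract.cohomologyEquiv (r : DeformationRetract d δ) (n : ℕ) :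
    cohomology d n ≃ₗ[R] cohomology δ n :=
  LinearEquiv.ofLinearMap (cohomologyMap r.proj r.d_comp_proj n)
    (cohomologyMap r.incl r.d_comp_incl n)
    (by
      ext z
      exact congrArg Submodule.Quotient.mk
        (Subtype.ext (LinearMap.congr_fun (r.proj_comp_incl n) (z : C n))))
    (by
      ext z
      refine ((Submodule.Quotient.eq _).2 ?_).symm
      exact sub_apply_mem_coboundaries (r.id_sub_incl_comp_proj n) z.2)

section Pseudoinverse

variable (d) in
/-- The map `id - (d ∘ s + s ∘ d)`. It plays the role of the harmonic projection of Hodge theory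
when `d ∘ s ∘ d = d`, but it need not be idempotent. -/
def harmonicPart (s : ∀ p, A (p + 1) →ₗ[R] A p) (n : ℕ) : A n →ₗ[R] A n :=
  LinearMap.id - nullHomotopicMap d s n

variable {s : ∀ p, A (p + 1) →ₗ[R] A p}

theorem comp_harmonicPart (hd : ∀ p, d (p + 1) ∘ₗ d p = 0)
    (hs : ∀ p, d p ∘ₗ s p ∘ₗ d p = d p) (n : ℕ) : d n ∘ₗ harmonicPart d s n = 0 := by
  cases n with
  | zero => simp [harmonicPart, nullHomotopicMap, LinearMap.comp_sub, hs]
  | succ n =>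
    have hds : d (n + 1) ∘ₗ d n ∘ₗ s n = 0 := by
      rw [← LinearMap.comp_assoc, hd, LinearMap.zero_comp]
    simp [harmonicPart, nullHomotopicMap, LinearMap.comp_sub, LinearMap.comp_add, hs, hds]

theorem harmonicPart_comp (hd : ∀ p, d (p + 1) ∘ₗ d p = 0)
    (hs : ∀ p, d p ∘ₗ s p ∘ₗ d p = d p) (n : ℕ) : harmonicPart d s (n + 1) ∘ₗ d n = 0 := by
  simp [harmonicPart, nullHomotopicMap, LinearMap.sub_comp, LinearMap.add_comp,
    LinearMap.comp_assoc, hs, hd]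

-- Factor `1 - φ² = (1 - φ)(1 + φ)` for `φ` the harmonic part: `1 - φ` is null-homotopic and `1 + φ`
-- is a cochain map.
theorem id_sub_harmonicPart_comp_self (hd : ∀ p, d (p + 1) ∘ₗ d p = 0)
    (hs : ∀ p, d p ∘ₗ s p ∘ₗ d p = d p) (n : ℕ) :
    LinearMap.id - harmonicPart d s n ∘ₗ harmonicPart d s n =
      nullHomotopicMap d (fun p => s p ∘ₗ (LinearMap.id + harmonicPart d s (p + 1))) n := by
  have comm (p) : d p ∘ₗ (LinearMap.id + harmonicPart d s p) =
      (LinearMap.id + harmonicPart d s (p + 1)) ∘ₗ d p := by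
    simp [LinearMap.comp_add, LinearMap.add_comp, comp_harmonicPart hd hs, harmonicPart_comp hd hs]
  have null_eq : nullHomotopicMap d s n = LinearMap.id - harmonicPart d s n := by
    simp [harmonicPart]
  rw [nullHomotopicMap_comp s comm, null_eq]
  simp [LinearMap.comp_add, LinearMap.sub_comp]

/-- Maps `s` with `d ∘ s ∘ d = d` give a deformation retraction onto the cohomology, whose
projection and inclusion are both induced by the harmonic part. -/
def DeformationRetract.ofPseudoinverse (hd : ∀ p, d (p + 1) ∘ₗ d p = 0)
    (hs : ∀ p, d p ∘ₗ s p ∘ₗ d p = d p) :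
    DeformationRetract (C := cohomology d) d 0 where
  proj p := Submodule.mkQ _ ∘ₗ (harmonicPart d s p).codRestrict (LinearMap.ker (d p))
    (LinearMap.congr_fun (comp_harmonicPart hd hs p))
  incl p := Submodule.liftQ _ (harmonicPart d s p ∘ₗ (LinearMap.ker (d p)).subtype)
    fun _ hz => coboundaries_le_ker (harmonicPart_comp hd hs) p hz
  homotopy p := s p ∘ₗ (LinearMap.id + harmonicPart d s (p + 1))
  d_comp_proj p := by
    ext x
    have map_d_x : harmonicPart d s (p + 1) (d p x) = 0 :=
      LinearMap.congr_fun (harmonicPart_comp hd hs p) x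
    exact (congrArg Submodule.Quotient.mk (Subtype.ext map_d_x)).symm
  d_comp_incl p := by
    rw [Pi.zero_apply, LinearMap.comp_zero]
    ext z
    exact LinearMap.congr_fun (comp_harmonicPart hd hs p) (z : A p)
  proj_comp_incl p := by
    ext z
    refine ((Submodule.Quotient.eq _).2 ?_).symm
    exact sub_apply_mem_coboundaries (id_sub_harmonicPart_comp_self hd hs p) z.2
  id_sub_incl_comp_proj := id_sub_harmonicPart_comp_self hd hs

end Pseudoinverse

end Complexes

section Splitting

variable {K : Type*} [DivisionRing K]

theorem exists_pseudoinverse {V W : Type*} [AddCommGroup V] [Module K V]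
    [AddCommGroup W] [Module K W] (f : V →ₗ[K] W) : ∃ g : W →ₗ[K] V, f ∘ₗ g ∘ₗ f = f := by
  obtain ⟨g, hg⟩ := f.rangeRestrict.exists_rightInverse_of_surjective f.range_rangeRestrict
  obtain ⟨g', rfl⟩ := g.exists_extend
  refine ⟨g', LinearMap.ext fun x => ?_⟩
  exact congrArg Subtype.val (LinearMap.congr_fun hg (f.rangeRestrict x))

theorem nonempty_deformationRetract_cohomology {A : ℕ → Type*} [∀ p, AddCommGroup (A p)]
    [∀ p, Module K (A p)] {d : ∀ p, A p →ₗ[K] A (p + 1)} (hd : ∀ p, d (p + 1) ∘ₗ d p = 0) :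
    Nonempty (DeformationRetract (C := cohomology d) d 0) := by
  choose s hs using fun p => exists_pseudoinverse (d p)
  exact ⟨.ofPseudoinverse hd hs⟩

end Splitting

section Tensor

universe u v₁ v₂ w₁ w₂

variable {R : Type u} [CommRing R]
  {A : ℕ → Type v₁} [∀ p, AddCommGroup (A p)] [∀ p, Module R (A p)]
  {C : ℕ → Type w₁} [∀ p, AddCommGroup (C p)] [∀ p, Module R (C p)]
  {B : ℕ → Type v₂} [∀ p, AddCommGroup (B p)] [∀ p, Module R (B p)]
  {E : ℕ → Type w₂} [∀ p, AddCommGroup (E p)] [∀ p, Module R (E p)]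

variable (R A B) in
/-- The degree-`n` part of the tensor product of two graded modules over a commutative ring. -/
abbrev tensorObj (n : ℕ) : Type max v₁ v₂ := ⨁ pq : TIdx n, (A pq.1.1 ⊗[R] B pq.1.2)

/-- The inclusion of the summand `A p ⊗ B q` in degree `n = p + q` of the tensor product. -/
abbrev ofTensor {n p q : ℕ} (hpq : p + q = n) : A p ⊗[R] B q →ₗ[R] tensorObj R A B n :=
  DirectSum.lof R (TIdx n) (fun rs => A rs.1.1 ⊗[R] B rs.1.2) ⟨(p, q), hpq⟩

theorem tensorObj_ext {M : Type*} [AddCommGroup M] [Module R M] {n : ℕ}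
    {f g : tensorObj R A B n →ₗ[R] M}
    (hfg : ∀ {p q} (hpq : p + q = n) (x : A p) (y : B q),
      f (ofTensor hpq (x ⊗ₜ y)) = g (ofTensor hpq (x ⊗ₜ y))) : f = g :=
  DirectSum.linearMap_ext R fun ⟨_, hpq⟩ => TensorProduct.ext' (hfg hpq)

/-- The map of tensor products of graded modules induced by degree-preserving maps of the
factors. -/
def tensorMap (f : ∀ p, A p →ₗ[R] C p) (g : ∀ q, B q →ₗ[R] E q) (n : ℕ) :
    tensorObj R A B n →ₗ[R] tensorObj R C E n :=
  DirectSum.lmap fun pq => TensorProduct.map (f pq.1.1) (g pq.1.2)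

/-- The differential `d₁ ⊗ id + (-1)^p id ⊗ d₂` of the tensor product of two complexes over a
commutative ring. -/
def tensorDifferential (d₁ : ∀ p, A p →ₗ[R] A (p + 1)) (d₂ : ∀ q, B q →ₗ[R] B (q + 1)) (n : ℕ) :
    tensorObj R A B n →ₗ[R] tensorObj R A B (n + 1) :=
  DirectSum.toModule R (TIdx n) (tensorObj R A B (n + 1)) fun pq =>
    ofTensor (by have := pq.2; omega) ∘ₗ TensorProduct.map (d₁ pq.1.1) LinearMap.id
    + (-1 : R) ^ pq.1.1 •
      (ofTensor (by have := pq.2; omega) ∘ₗ TensorProduct.map LinearMap.id (d₂ pq.1.2))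

/-- The map `h ⊗ id` of degree `-1` on a tensor product, for `h` of degree `-1` on the left
factor. -/
def leftHomotopy (h : ∀ p, A (p + 1) →ₗ[R] A p) (n : ℕ) :
    tensorObj R A B (n + 1) →ₗ[R] tensorObj R A B n :=
  DirectSum.toModule R (TIdx (n + 1)) (tensorObj R A B n) fun
    | ⟨(0, _), _⟩ => 0
    | ⟨(p + 1, q), hpq⟩ =>
      ofTensor (p := p) (q := q) (by dsimp only at hpq; omega) ∘ₗ
        TensorProduct.map (h p) LinearMap.id

/-- The map `(-1)^p id ⊗ h` of degree `-1` on a tensor product, for `h` of degree `-1` on the right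
factor. -/
def rightHomotopy (h : ∀ q, B (q + 1) →ₗ[R] B q) (n : ℕ) :
    tensorObj R A B (n + 1) →ₗ[R] tensorObj R A B n :=
  DirectSum.toModule R (TIdx (n + 1)) (tensorObj R A B n) fun
    | ⟨(_, 0), _⟩ => 0
    | ⟨(p, q + 1), hpq⟩ => (-1 : R) ^ p •
      (ofTensor (p := p) (q := q) (by dsimp only at hpq; omega) ∘ₗ
        TensorProduct.map LinearMap.id (h q))

section Apply

variable {n p q : ℕ}

theorem tensorMap_tmul (f : ∀ p, A p →ₗ[R] C p) (g : ∀ q, B q →ₗ[R] E q) (hpq : p + q = n)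
    (x : A p) (y : B q) :
    tensorMap f g n (ofTensor hpq (x ⊗ₜ y)) = ofTensor hpq (f p x ⊗ₜ[R] g q y) :=
  DirectSum.lmap_lof ..

theorem tensorDifferential_tmul (d₁ : ∀ p, A p →ₗ[R] A (p + 1)) (d₂ : ∀ q, B q →ₗ[R] B (q + 1))
    (hpq : p + q = n) (x : A p) (y : B q) :
    tensorDifferential d₁ d₂ n (ofTensor hpq (x ⊗ₜ y)) =
      ofTensor (by omega) (d₁ p x ⊗ₜ[R] y)
      + (-1 : R) ^ p • ofTensor (by omega) (x ⊗ₜ[R] d₂ q y) :=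
  DirectSum.toModule_lof ..

theorem leftHomotopy_zero_tmul (h : ∀ p, A (p + 1) →ₗ[R] A p) (hq : 0 + q = n + 1) (x : A 0)
    (y : B q) : leftHomotopy h n (ofTensor hq (x ⊗ₜ[R] y)) = 0 :=
  DirectSum.toModule_lof ..

theorem leftHomotopy_succ_tmul (h : ∀ p, A (p + 1) →ₗ[R] A p) (hpq : p + 1 + q = n + 1)
    (x : A (p + 1)) (y : B q) :
    leftHomotopy h n (ofTensor hpq (x ⊗ₜ y)) = ofTensor (by omega) (h p x ⊗ₜ[R] y) :=
  DirectSum.toModule_lof ..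

theorem rightHomotopy_tmul_zero (h : ∀ q, B (q + 1) →ₗ[R] B q) (hp : p + 0 = n + 1) (x : A p)
    (y : B 0) : rightHomotopy h n (ofTensor hp (x ⊗ₜ[R] y)) = 0 :=
  DirectSum.toModule_lof ..

theorem rightHomotopy_tmul_succ (h : ∀ q, B (q + 1) →ₗ[R] B q) (hpq : p + (q + 1) = n + 1)
    (x : A p) (y : B (q + 1)) :
    rightHomotopy h n (ofTensor hpq (x ⊗ₜ y)) =
      (-1 : R) ^ p • ofTensor (by omega) (x ⊗ₜ[R] h q y) :=
  DirectSum.toModule_lof ..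

end Apply

variable {d₁ : ∀ p, A p →ₗ[R] A (p + 1)} {δ₁ : ∀ p, C p →ₗ[R] C (p + 1)}
  {d₂ : ∀ q, B q →ₗ[R] B (q + 1)} {δ₂ : ∀ q, E q →ₗ[R] E (q + 1)}

theorem tensorDifferential_comp_tensorMap {f : ∀ p, A p →ₗ[R] C p} {g : ∀ q, B q →ₗ[R] E q}
    (hf : ∀ p, δ₁ p ∘ₗ f p = f (p + 1) ∘ₗ d₁ p) (hg : ∀ q, δ₂ q ∘ₗ g q = g (q + 1) ∘ₗ d₂ q)
    (n : ℕ) :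
    tensorDifferential δ₁ δ₂ n ∘ₗ tensorMap f g n =
      tensorMap f g (n + 1) ∘ₗ tensorDifferential d₁ d₂ n := by
  refine tensorObj_ext fun {p q} hpq x y => ?_
  have hfx : δ₁ p (f p x) = f (p + 1) (d₁ p x) := LinearMap.congr_fun (hf p) x
  have hgy : δ₂ q (g q y) = g (q + 1) (d₂ q y) := LinearMap.congr_fun (hg q) y
  simp only [LinearMap.comp_apply, tensorMap_tmul, tensorDifferential_tmul, map_add, map_smul,
    hfx, hgy]

theorem tensorDifferential_zero_zero (n : ℕ) :
    tensorDifferential (0 : ∀ p, A p →ₗ[R] A (p + 1)) (0 : ∀ q, B q →ₗ[R] B (q + 1)) n = 0 :=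
  tensorObj_ext fun hpq x y => by simp [tensorDifferential_tmul]

theorem nullHomotopicMap_leftHomotopy (h : ∀ p, A (p + 1) →ₗ[R] A p) (n : ℕ) :
    nullHomotopicMap (tensorDifferential d₁ d₂) (leftHomotopy h) n =
      tensorMap (nullHomotopicMap d₁ h) (fun _ => LinearMap.id) n := by
  refine tensorObj_ext fun {p q} hpq x y => ?_
  cases n with
  | zero =>
    obtain ⟨rfl, rfl⟩ : p = 0 ∧ q = 0 := by omega
    simp [nullHomotopicMap, tensorMap_tmul, tensorDifferential_tmul, leftHomotopy_succ_tmul,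
      leftHomotopy_zero_tmul]
  | succ n =>
    cases p with
    | zero =>
      simp [nullHomotopicMap, tensorMap_tmul, tensorDifferential_tmul, leftHomotopy_succ_tmul,
        leftHomotopy_zero_tmul]
    | succ p =>
      simp only [nullHomotopicMap, LinearMap.add_apply, LinearMap.comp_apply, LinearMap.id_apply,
        tensorMap_tmul, tensorDifferential_tmul, leftHomotopy_succ_tmul, TensorProduct.add_tmul,
        map_add, map_smul]
      module

theorem nullHomotopicMap_rightHomotopy (h : ∀ q, B (q + 1) →ₗ[R] B q) (n : ℕ) :
    nullHomotopicMap (tensorDifferential d₁ d₂) (rightHomotopy h) n =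
      tensorMap (fun _ => LinearMap.id) (nullHomotopicMap d₂ h) n := by
  refine tensorObj_ext fun {p q} hpq x y => ?_
  have sign_sq : (-1 : R) ^ p * (-1) ^ p = 1 := by rw [← mul_pow]; simp
  cases n with
  | zero =>
    obtain ⟨rfl, rfl⟩ : p = 0 ∧ q = 0 := by omega
    simp [nullHomotopicMap, tensorMap_tmul, tensorDifferential_tmul, rightHomotopy_tmul_succ,
      rightHomotopy_tmul_zero]
  | succ n =>
    cases q with
    | zero =>
      simp [nullHomotopicMap, tensorMap_tmul, tensorDifferential_tmul, rightHomotopy_tmul_succ,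
        rightHomotopy_tmul_zero, smul_smul, sign_sq]
    | succ q =>
      simp only [nullHomotopicMap, LinearMap.add_apply, LinearMap.comp_apply, LinearMap.id_apply,
        tensorMap_tmul, tensorDifferential_tmul, rightHomotopy_tmul_succ, TensorProduct.tmul_add,
        map_add, map_smul, smul_add, smul_smul, sign_sq, one_smul]
      module

namespace DeformationRetract

variable (d₂) in
/-- Tensoring a deformation retraction with a fixed complex on the right. -/
def tensorRight (r : DeformationRetract d₁ δ₁) :
    DeformationRetract (tensorDifferential d₁ d₂) (tensorDifferential δ₁ d₂) where
  proj := tensorMap r.proj fun _ => LinearMap.id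
  incl := tensorMap r.incl fun _ => LinearMap.id
  homotopy := leftHomotopy r.homotopy
  d_comp_proj := tensorDifferential_comp_tensorMap r.d_comp_proj fun _ => rfl
  d_comp_incl := tensorDifferential_comp_tensorMap r.d_comp_incl fun _ => rfl
  proj_comp_incl n := tensorObj_ext fun {p q} hpq x y => by
    have key : r.proj p (r.incl p x) = x := LinearMap.congr_fun (r.proj_comp_incl p) x
    simp [tensorMap_tmul, key]
  id_sub_incl_comp_proj n := by
    rw [nullHomotopicMap_leftHomotopy]
    refine tensorObj_ext fun {p q} hpq x y => ?_
    simp [tensorMap_tmul, ← r.id_sub_incl_comp_proj, TensorProduct.sub_tmul]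

variable (d₁) in
/-- Tensoring a deformation retraction with a fixed complex on the left. -/
def tensorLeft (r : DeformationRetract d₂ δ₂) :
    DeformationRetract (tensorDifferential d₁ d₂) (tensorDifferential d₁ δ₂) where
  proj := tensorMap (fun _ => LinearMap.id) r.proj
  incl := tensorMap (fun _ => LinearMap.id) r.incl
  homotopy := rightHomotopy r.homotopy
  d_comp_proj := tensorDifferential_comp_tensorMap (fun _ => rfl) r.d_comp_proj
  d_comp_incl := tensorDifferential_comp_tensorMap (fun _ => rfl) r.d_comp_incl
  proj_comp_incl n := tensorObj_ext fun {p q} hpq x y => by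
    have key : r.proj q (r.incl q y) = y := LinearMap.congr_fun (r.proj_comp_incl q) y
    simp [tensorMap_tmul, key]
  id_sub_incl_comp_proj n := by
    rw [nullHomotopicMap_rightHomotopy]
    refine tensorObj_ext fun {p q} hpq x y => ?_
    simp [tensorMap_tmul, ← r.id_sub_incl_comp_proj, TensorProduct.tmul_sub]

end DeformationRetract

end Tensor

theorem stmt6_general {K : Type*} [Field K]
    {A : ℕ → Type*} [∀ p, AddCommGroup (A p)] [∀ p, Module K (A p)]
    {B : ℕ → Type*} [∀ q, AddCommGroup (B q)] [∀ q, Module K (B q)]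
    {d₁ : ∀ p, A p →ₗ[K] A (p + 1)} {d₂ : ∀ q, B q →ₗ[K] B (q + 1)}
    (hd₁ : ∀ p, d₁ (p + 1) ∘ₗ d₁ p = 0) (hd₂ : ∀ q, d₂ (q + 1) ∘ₗ d₂ q = 0) (n : ℕ) :
    Nonempty (cohomology (tensorDifferential d₁ d₂) n ≃ₗ[K]
      tensorObj K (cohomology d₁) (cohomology d₂) n) := by
  obtain ⟨r₁⟩ := nonempty_deformationRetract_cohomology hd₁
  obtain ⟨r₂⟩ := nonempty_deformationRetract_cohomology hd₂
  exact ⟨(r₁.tensorRight d₂).cohomologyEquiv n ≪≫ₗ (r₂.tensorLeft 0).cohomologyEquiv n ≪≫ₗ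
    cohomologyEquivOfEqZero tensorDifferential_zero_zero n⟩

/-- **Künneth formula**: if `(V₁, α₁)` and `(V₂, α₂)` are cochain complexes of real
vector spaces and `(V, α)` is their tensor product complex, then for every `n` there is
a linear isomorphism `H^n(V) ≅ ⊕_{p+q=n} H^p(V₁) ⊗ H^q(V₂)`. -/
theorem stmt6 (α₁ : ∀ p, V₁ p →ₗ[ℝ] V₁ (p + 1)) (α₂ : ∀ p, V₂ p →ₗ[ℝ] V₂ (p + 1))
    (hα₁ : ∀ p, (α₁ (p + 1)).comp (α₁ p) = 0) (hα₂ : ∀ p, (α₂ (p + 1)).comp (α₂ p) = 0)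
    (n : ℕ) :
    Nonempty (Hcoh (TObj V₁ V₂) (tAlpha V₁ V₂ α₁ α₂) n ≃ₗ[ℝ]
      ⨁ pq : TIdx n, (Hcoh V₁ α₁ pq.1.1 ⊗[ℝ] Hcoh V₂ α₂ pq.1.2)) :=
  stmt6_general hα₁ hα₂ n
end

section
/- Counting lemma for interior invariants (core of Lemma 4.4): let m, k, ℓ, p be natural numbers. Suppose given multi-indices α : Fin ℓ → (Fin m → ℕ) with |α i| := Σ_μ (α i)(μ) ≥ 2 for every i, multi-indices β : Fin p → (Fin m → ℕ), and index labels a, b : Fin ℓ → Fin m and c : Fin p → Fin m. For μ ∈ Fin m set deg μ := Σ_{i} ((if a i = μ then 1 else 0) + (if b i = μ then 1 else 0) + (α i)(μ)) + Σ_{j} ((if c j = μ then 1 else 0) + (β j)(μ)). Assume the total order satisfies Σ_i |α i| + Σ_j (1 + |β j|) = 2k and that deg μ ≥ 2 for every μ ∈ Fin m. Then m ≤ 2k; moreover, if m = 2k then p = 0. -/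
/-!
Summing the degrees over all indices counts every jet variable once for each index it involves:
`2 + |αᵢ|` for a metric variable, which exceeds its order by two, and `1 + |βⱼ|` for a
`Θ`-variable, which is exactly its order. For `ℓ` metric variables, `p` variables `Θ` and total
order `w` this gives `∑ μ, deg μ = 2ℓ + w`. Since `|αᵢ| ≥ 2`, the order also satisfies
`2ℓ + p ≤ w`, and since each of the `m` degrees is at least two, `2m + p ≤ 2ℓ + w + p ≤ 2w`.
-/

/-- A monomial `∏ i, g_{aᵢbᵢ/αᵢ} * ∏ j, Θ_{cⱼ/βⱼ}` in the jets of a metric and a 1-form, as the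
family of indices carried by its variables. The coordinate indices range over `ι`, the metric
variables are numbered by `I`, the 1-form variables by `J`, and the multi-indices are functions
`ι → ℕ`. -/
structure JetMonomial (ι I J : Type*) where
  a : I → ι
  b : I → ι
  α : I → ι → ℕ
  c : J → ι
  β : J → ι → ℕ

namespace JetMonomial

variable {ι I J : Type*} [Fintype I] [Fintype J]

/-- The degree `deg μ` of a monomial: the total number of occurrences of the index `μ`. -/
def degree [DecidableEq ι] (A : JetMonomial ι I J) (μ : ι) : ℕ :=
  (∑ i, ((if A.a i = μ then 1 else 0) + (if A.b i = μ then 1 else 0) + A.α i μ)) +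
    ∑ j, ((if A.c j = μ then 1 else 0) + A.β j μ)

variable [Fintype ι]

/-- The total order (weight) of a monomial: `g_{ab/α}` has order `|α|` and `Θ_{c/β}` has order
`1 + |β|`. -/
def order (A : JetMonomial ι I J) : ℕ :=
  (∑ i, ∑ μ, A.α i μ) + ∑ j, (1 + ∑ μ, A.β j μ)

theorem sum_degree [DecidableEq ι] (A : JetMonomial ι I J) :
    ∑ μ, A.degree μ = 2 * Fintype.card I + A.order := by
  have metric_count (i : I) :
      ∑ μ, ((if A.a i = μ then 1 else 0) + (if A.b i = μ then 1 else 0) + A.α i μ) =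
        2 + ∑ μ, A.α i μ := by
    simp [Finset.sum_add_distrib]
  have form_count (j : J) :
      ∑ μ, ((if A.c j = μ then 1 else 0) + A.β j μ) = 1 + ∑ μ, A.β j μ := by
    simp [Finset.sum_add_distrib]
  calc ∑ μ, A.degree μ
      = (∑ i, ∑ μ, ((if A.a i = μ then 1 else 0) + (if A.b i = μ then 1 else 0) + A.α i μ)) +
          ∑ j, ∑ μ, ((if A.c j = μ then 1 else 0) + A.β j μ) := by
        simp only [degree]
        rw [Finset.sum_add_distrib, Finset.sum_comm, Finset.sum_comm (γ := ι) (α := J)]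
    _ = (∑ i, (2 + ∑ μ, A.α i μ)) + ∑ j, (1 + ∑ μ, A.β j μ) := by
        simp only [metric_count, form_count]
    _ = 2 * Fintype.card I + A.order := by
        rw [Finset.sum_add_distrib, Finset.sum_const, Finset.card_univ, smul_eq_mul, order]
        ring

theorem mul_card_add_card_le_order (A : JetMonomial ι I J) {r : ℕ}
    (hα : ∀ i, r ≤ ∑ μ, A.α i μ) : r * Fintype.card I + Fintype.card J ≤ A.order := by
  have metric_part : r * Fintype.card I ≤ ∑ i, ∑ μ, A.α i μ := by
    simpa [mul_comm] using Finset.card_nsmul_le_sum Finset.univ _ r fun i _ ↦ hα i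
  have form_part : Fintype.card J ≤ ∑ j, (1 + ∑ μ, A.β j μ) := by
    simp [Finset.sum_add_distrib]
  exact add_le_add metric_part form_part

theorem two_mul_card_add_card_le_two_mul_order [DecidableEq ι] (A : JetMonomial ι I J)
    (hα : ∀ i, 2 ≤ ∑ μ, A.α i μ) (hdeg : ∀ μ, 2 ≤ A.degree μ) :
    2 * Fintype.card ι + Fintype.card J ≤ 2 * A.order := by
  have degree_bound : 2 * Fintype.card ι ≤ ∑ μ, A.degree μ := by
    simpa [mul_comm] using Finset.card_nsmul_le_sum Finset.univ A.degree 2 fun μ _ ↦ hdeg μ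
  have order_bound := A.mul_card_add_card_le_order hα
  rw [sum_degree] at degree_bound
  omega

end JetMonomial

theorem stmt8_general {ι I J : Type*} [Fintype ι] [DecidableEq ι] [Fintype I] [Fintype J]
    (A : JetMonomial ι I J) (hα : ∀ i, 2 ≤ ∑ μ, A.α i μ) (hdeg : ∀ μ, 2 ≤ A.degree μ) :
    Fintype.card ι ≤ A.order ∧ (Fintype.card ι = A.order → Fintype.card J = 0) := by
  have := A.two_mul_card_add_card_le_two_mul_order hα hdeg
  omega

/-- **Counting lemma for interior invariants** (core of Lemma 4.4 of
Álvarez-López–Gilkey, "The local index density of the perturbed de Rham complex").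
For a monomial `A = g_{a₁b₁/α₁} ⋯ g_{aₗbₗ/αₗ} Θ_{c₁/β₁} ⋯ Θ_{c_p/β_p}` of total weight `2k`,
where every metric jet variable has order `|αᵢ| ≥ 2`, if every index `μ` occurs at least
twice in `A`, then `m ≤ 2k`; and if moreover `m = 2k`, then no `Θ`-variables occur (`p = 0`). -/
theorem stmt8 (m k ℓ p : ℕ)
    (α : Fin ℓ → (Fin m → ℕ)) (a b : Fin ℓ → Fin m)
    (β : Fin p → (Fin m → ℕ)) (c : Fin p → Fin m)
    (hα : ∀ i, 2 ≤ ∑ μ, α i μ)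
    (deg : Fin m → ℕ)
    (hdeg_def : ∀ μ, deg μ =
      (∑ i, ((if a i = μ then 1 else 0) + (if b i = μ then 1 else 0) + α i μ)) +
      (∑ j, ((if c j = μ then 1 else 0) + β j μ)))
    (horder : (∑ i, ∑ μ, α i μ) + (∑ j, (1 + ∑ μ, β j μ)) = 2 * k)
    (hdeg : ∀ μ, 2 ≤ deg μ) :
    m ≤ 2 * k ∧ (m = 2 * k → p = 0) := by
  simpa only [JetMonomial.order, horder, Fintype.card_fin] using
    stmt8_general ⟨a, b, α, c, β⟩ hα fun μ ↦ (hdeg μ).trans_eq (hdeg_def μ)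
end

section
/- Counting lemma for boundary invariants (core of Lemma 4.7): let m ≥ 1 and n, ℓ, p, q be natural numbers. Suppose given multi-indices α : Fin ℓ → (Fin m → ℕ) with |α i| ≥ 2 for every i, multi-indices β : Fin p → (Fin m → ℕ), index labels a, b : Fin ℓ → Fin m and c : Fin p → Fin m, and tangential index labels d, e : Fin q → Fin m with d r ≠ m−1 and e r ≠ m−1 for all r (the index m−1 plays the role of the inward normal). For a tangential index μ ∈ Fin m with μ ≠ m−1 set deg μ := Σ_i ((if a i = μ then 1 else 0) + (if b i = μ then 1 else 0) + (α i)(μ)) + Σ_j ((if c j = μ then 1 else 0) + (β j)(μ)) + Σ_r ((if d r = μ then 1 else 0) + (if e r = μ then 1 else 0)). Assume n = Σ_i |α i| + Σ_j (1 + |β j|) + q and deg μ ≥ 2 for every tangential μ. Then m − 1 ≤ n; moreover, if n = m − 1 then p = 0. -/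
/-!
Count the index slots of a monomial. A variable `g_{ab/α}` has `2 + |α| ≤ 2|α|` slots since
`|α| ≥ 2`, a variable `g_{de/m}` has `2` slots besides the normal derivative, and a variable
`Θ_{c/β}` has `1 + |β|` slots, short of twice its order by at least one. Hence a monomial of order
`n` with `p` form variables has at most `2n - p` slots. As each tangential index fills at least two
of them, twice the number of tangential indices is at most `2n - p`.
-/

open Finset

/-- A monomial `∏ g_{aᵢbᵢ/αᵢ} · ∏ Θ_{cⱼ/βⱼ} · ∏ g_{dᵣeᵣ/m}` in jet variables with indices in `ι`,
whose metric, 1-form and second-fundamental-form factors are labelled by `L`, `P` and `Q`.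
The normal derivative `/m` of the last kind of factor is implicit. -/
structure BoundaryMonomial (ι L P Q : Type*) where
  (a b : L → ι)
  (α : L → ι → ℕ)
  (c : P → ι)
  (β : P → ι → ℕ)
  (d e : Q → ι)

namespace BoundaryMonomial

variable {ι L P Q : Type*} [Fintype L] [Fintype P] [Fintype Q]

/-- The number `deg μ` of occurrences of the index `μ` in a monomial, not counting the implicit
normal derivatives of the factors `g_{dᵣeᵣ/m}`. -/
def deg [DecidableEq ι] (M : BoundaryMonomial ι L P Q) (μ : ι) : ℕ :=
  (∑ i, ((if M.a i = μ then 1 else 0) + (if M.b i = μ then 1 else 0) + M.α i μ)) +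
  (∑ j, ((if M.c j = μ then 1 else 0) + M.β j μ)) +
  (∑ r, ((if M.d r = μ then 1 else 0) + (if M.e r = μ then 1 else 0)))

/-- The total order of a monomial, in which `g_{ab/α}` has order `|α|`, `Θ_{c/β}` has order
`1 + |β|` and `g_{de/m}` has order `1`. -/
def order [Fintype ι] (M : BoundaryMonomial ι L P Q) : ℕ :=
  (∑ i, ∑ μ, M.α i μ) + (∑ j, (1 + ∑ μ, M.β j μ)) + Fintype.card Q

variable [Fintype ι] [DecidableEq ι] (M : BoundaryMonomial ι L P Q)

theorem sum_deg :
    ∑ μ, M.deg μ =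
      (∑ i, (2 + ∑ μ, M.α i μ)) + (∑ j, (1 + ∑ μ, M.β j μ)) + 2 * Fintype.card Q := by
  simp only [deg, sum_add_distrib (s := (univ : Finset ι))]
  rw [sum_comm, sum_comm (t := (univ : Finset P)), sum_comm (t := (univ : Finset Q))]
  simp [sum_add_distrib, mul_comm]

theorem sum_deg_add_card_le_two_mul_order (hα : ∀ i, 2 ≤ ∑ μ, M.α i μ) :
    ∑ μ, M.deg μ + Fintype.card P ≤ 2 * M.order := by
  have metric : ∑ i, (2 + ∑ μ, M.α i μ) ≤ 2 * ∑ i, ∑ μ, M.α i μ := by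
    rw [mul_sum]
    exact sum_le_sum fun i _ => by have := hα i; omega
  have form : Fintype.card P ≤ ∑ j, (1 + ∑ μ, M.β j μ) := by
    simp [sum_add_distrib]
  rw [sum_deg, order]
  omega

theorem two_mul_card_add_card_le_two_mul_order (hα : ∀ i, 2 ≤ ∑ μ, M.α i μ) (T : Finset ι)
    (hdeg : ∀ μ ∈ T, 2 ≤ M.deg μ) :
    2 * #T + Fintype.card P ≤ 2 * M.order :=
  calc
    2 * #T + Fintype.card P ≤ ∑ μ ∈ T, M.deg μ + Fintype.card P := by
      gcongr
      simpa [mul_comm] using T.card_nsmul_le_sum M.deg 2 hdeg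
    _ ≤ ∑ μ, M.deg μ + Fintype.card P := by
      gcongr
      exact T.subset_univ
    _ ≤ 2 * M.order := M.sum_deg_add_card_le_two_mul_order hα

end BoundaryMonomial

theorem stmt9_general {ι L P Q : Type*} [Fintype ι] [DecidableEq ι] [Fintype L] [Fintype P]
    [Fintype Q] (M : BoundaryMonomial ι L P Q) (hα : ∀ i, 2 ≤ ∑ μ, M.α i μ) (T : Finset ι)
    (hdeg : ∀ μ ∈ T, 2 ≤ M.deg μ) :
    #T ≤ M.order ∧ (M.order = #T → IsEmpty P) := by
  have h := M.two_mul_card_add_card_le_two_mul_order hα T hdeg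
  exact ⟨by omega, fun hT => Fintype.card_eq_zero_iff.mp (by omega)⟩

/-- **Counting lemma for boundary invariants** (core of Lemma 4.7 of
Álvarez-López–Gilkey). For a monomial built from metric jet variables `g_{aᵢbᵢ/αᵢ}` of
order `|αᵢ| ≥ 2`, 1-form jet variables `Θ_{cⱼ/βⱼ}` of order `1+|βⱼ|`, and `q`
second-fundamental-form variables `g_{dᵣeᵣ/m}` of order `1` with tangential free indices
(`d r ≠ m-1`, `e r ≠ m-1`, the index `m-1` playing the role of the inward normal),
of total order `n`, if every tangential index `μ ≠ m-1` occurs at least twice, then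
`m - 1 ≤ n`; and if moreover `n = m - 1`, then no `Θ`-variables occur (`p = 0`). -/
theorem stmt9 (m n ℓ p q : ℕ) (hm : 1 ≤ m)
    (α : Fin ℓ → (Fin m → ℕ)) (a b : Fin ℓ → Fin m)
    (β : Fin p → (Fin m → ℕ)) (c : Fin p → Fin m)
    (d e : Fin q → Fin m)
    (hα : ∀ i, 2 ≤ ∑ μ, α i μ)
    (hd : ∀ r, (d r : ℕ) ≠ m - 1) (he : ∀ r, (e r : ℕ) ≠ m - 1)
    (deg : Fin m → ℕ)
    (hdeg_def : ∀ μ, deg μ =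
      (∑ i, ((if a i = μ then 1 else 0) + (if b i = μ then 1 else 0) + α i μ)) +
      (∑ j, ((if c j = μ then 1 else 0) + β j μ)) +
      (∑ r, ((if d r = μ then 1 else 0) + (if e r = μ then 1 else 0))))
    (horder : n = (∑ i, ∑ μ, α i μ) + (∑ j, (1 + ∑ μ, β j μ)) + q)
    (hdeg : ∀ μ : Fin m, (μ : ℕ) ≠ m - 1 → 2 ≤ deg μ) :
    m - 1 ≤ n ∧ (n = m - 1 → p = 0) := by
  have h := stmt9_general ⟨a, b, α, c, β, d, e⟩ hα (univ.erase ⟨m - 1, by omega⟩)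
    fun μ hμ => (hdeg μ (by simpa [Fin.ext_iff] using hμ)).trans_eq (hdeg_def μ)
  simpa [BoundaryMonomial.order, horder, ← Fintype.card_eq_zero_iff] using h
end
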